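/- A vector x ∈ ℤ_{≥0}^n is the degree sequence of some k-uniform multi-hypergraph on the vertex set {1, …, n} if and only if k · T_{n,k}(x) = Σ_{i=1}^n x_i. -/

import Mathlib

/-- A move in Exact k-Nim `Nim^=_{n,k}`: all piles weakly decrease and
exactly `k` piles strictly decrease. -/
def ExactMove (n k : ℕ) (x x' : Fin n → ℕ) : Prop :=
  (∀ i, x' i ≤ x i) ∧ (Finset.univ.filter fun i => x' i < x i).card = k

/-- There is a chain of `m` consecutive moves starting at `x`. -/
def HasChain (n k : ℕ) (x : Fin n → ℕ) (m : ℕ) : Prop :=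
  ∃ f : Fin (m + 1) → Fin n → ℕ, f 0 = x ∧
    ∀ i : Fin m, ExactMove n k (f i.castSucc) (f i.succ)

/-- The Tetris function `T_{n,k}(x)`: the maximum number of consecutive moves
that can be made starting from `x`. -/
noncomputable def tetris (n k : ℕ) (x : Fin n → ℕ) : ℕ :=
  sSup {m | HasChain n k x m}

/-!
Recording which piles shrink in each move turns a chain of `m` moves from `x` into a `k`-uniform
multi-hypergraph with `m` hyperedges whose degrees are at most `x`. Conversely, such a hypergraph
is played off one hyperedge at a time, taking a single token from each pile of the hyperedge. So
`tetris n k x` is the largest number of hyperedges compatible with the degree bound `x`, and by the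
handshake identity `∑ i, deg i = k * m` the bound is attained everywhere exactly when
`k * tetris n k x = ∑ i, x i`.
-/

section VertexDegree

variable {V : Type*} [DecidableEq V]

/-- The degree of the vertex `v` in the multi-hypergraph on `V` whose hyperedges are the members
of `H`, counted with multiplicity. -/
def vertexDegree (H : Multiset (Finset V)) (v : V) : ℕ :=
  (H.filter fun e => v ∈ e).card

theorem vertexDegree_zero : vertexDegree (0 : Multiset (Finset V)) = 0 := rfl

theorem vertexDegree_cons (e : Finset V) (H : Multiset (Finset V)) :
    vertexDegree (e ::ₘ H) = vertexDegree H + (e : Set V).indicator 1 := by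
  ext v
  by_cases hv : v ∈ e <;> simp [vertexDegree, hv]

theorem sum_vertexDegree [Fintype V] (H : Multiset (Finset V)) :
    ∑ v, vertexDegree H v = (H.map Finset.card).sum := by
  induction H using Multiset.induction_on with
  | empty => simp [vertexDegree_zero]
  | cons e H ih =>
    simp [vertexDegree_cons, Finset.sum_add_distrib, ih, Set.indicator_apply, add_comm]

theorem sum_vertexDegree_of_uniform [Fintype V] {k : ℕ} {H : Multiset (Finset V)}
    (hH : ∀ e ∈ H, e.card = k) : ∑ v, vertexDegree H v = k * H.card := by
  rw [sum_vertexDegree, Multiset.map_congr rfl hH, Multiset.map_const', Multiset.sum_replicate,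
    smul_eq_mul, mul_comm]

end VertexDegree

theorem add_indicator_lt_le {ι : Type*} {x y : ι → ℕ} (h : y ≤ x) :
    y + {i | y i < x i}.indicator 1 ≤ x := by
  intro i
  by_cases hi : y i < x i
  · simp [hi]
  · simpa [hi] using h i

section Chain

variable {n k m : ℕ} {x : Fin n → ℕ}

theorem exactMove_sub_indicator {e : Finset (Fin n)} (he : (e : Set (Fin n)).indicator 1 ≤ x) :
    ExactMove n e.card x (x - (e : Set (Fin n)).indicator 1) := by
  refine ⟨fun i => Nat.sub_le _ _, congrArg Finset.card ?_⟩
  ext i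
  by_cases hi : i ∈ e
  · have hpos : 1 ≤ x i := by simpa [hi] using he i
    simp [hi, Nat.succ_le_iff.1 hpos]
  · simp [hi]

theorem hasChain_zero : HasChain n k x 0 :=
  ⟨fun _ => x, rfl, fun i => i.elim0⟩

theorem hasChain_succ_iff :
    HasChain n k x (m + 1) ↔ ∃ y, ExactMove n k x y ∧ HasChain n k y m := by
  constructor
  · rintro ⟨f, rfl, hf⟩
    exact ⟨f 1, hf 0, fun i => f i.succ, rfl, fun i => hf i.succ⟩
  · rintro ⟨y, hxy, f, rfl, hf⟩
    exact ⟨Fin.cons x f, rfl, Fin.cases hxy hf⟩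

theorem hasChain_iff_exists_vertexDegree_le :
    HasChain n k x m ↔ ∃ H : Multiset (Finset (Fin n)),
      (∀ e ∈ H, e.card = k) ∧ H.card = m ∧ vertexDegree H ≤ x := by
  induction m generalizing x with
  | zero => simp [hasChain_zero, vertexDegree_zero]
  | succ m ih =>
    simp only [hasChain_succ_iff, ih]
    constructor
    · rintro ⟨y, hxy, H, hH, rfl, hHy⟩
      refine ⟨(Finset.univ.filter fun i => y i < x i) ::ₘ H,
        Multiset.forall_mem_cons.2 ⟨hxy.2, hH⟩, Multiset.card_cons _ _, ?_⟩
      rw [vertexDegree_cons, Finset.coe_filter_univ]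
      exact (add_le_add_left hHy _).trans (add_indicator_lt_le hxy.1)
    · rintro ⟨H', hH', hcard, hdeg⟩
      obtain ⟨e, H, rfl, rfl⟩ := Multiset.card_eq_succ_iff.1 hcard
      obtain ⟨rfl, hH⟩ := Multiset.forall_mem_cons.1 hH'
      rw [vertexDegree_cons] at hdeg
      exact ⟨_, exactMove_sub_indicator (le_of_add_le_right hdeg), H, hH, rfl,
        le_tsub_of_add_le_right hdeg⟩

theorem HasChain.mul_le_sum (h : HasChain n k x m) : k * m ≤ ∑ i, x i := by
  obtain ⟨H, hH, rfl, hdeg⟩ := hasChain_iff_exists_vertexDegree_le.1 h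
  rw [← sum_vertexDegree_of_uniform hH]
  exact Finset.sum_le_sum fun i _ => hdeg i

theorem isGreatest_tetris (hk : 0 < k) : IsGreatest {m | HasChain n k x m} (tetris n k x) := by
  have hbdd : BddAbove {m | HasChain n k x m} :=
    ⟨∑ i, x i, fun m hm => (Nat.le_mul_of_pos_left m hk).trans hm.mul_le_sum⟩
  exact ⟨Nat.sSup_mem ⟨0, hasChain_zero⟩ hbdd, fun _ => le_csSup hbdd⟩

end Chain

/-- A vector `x` is the degree sequence of a `k`-uniform multi-hypergraph on `n`
vertices iff `k · T_{n,k}(x) = Σᵢ xᵢ`. -/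
theorem degree_sequence_iff_tetris (n k : ℕ) (hk1 : 1 ≤ k) (hkn : k ≤ n)
    (x : Fin n → ℕ) :
    (∃ H : Multiset (Finset (Fin n)), (∀ e ∈ H, e.card = k) ∧
        ∀ i : Fin n, (H.filter fun e => i ∈ e).card = x i) ↔
      k * tetris n k x = ∑ i, x i := by
  obtain ⟨hchain, hmax⟩ := isGreatest_tetris (x := x) hk1
  constructor
  · rintro ⟨H, hH, hdeg⟩
    obtain rfl : vertexDegree H = x := funext hdeg
    have hle : H.card ≤ tetris n k (vertexDegree H) :=
      hmax (hasChain_iff_exists_vertexDegree_le.2 ⟨H, hH, rfl, le_rfl⟩)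
    refine le_antisymm hchain.mul_le_sum ?_
    rw [sum_vertexDegree_of_uniform hH]
    exact Nat.mul_le_mul_left k hle
  · intro hsum
    obtain ⟨H, hH, hcard, hdeg⟩ := hasChain_iff_exists_vertexDegree_le.1 hchain
    rw [← hcard, ← sum_vertexDegree_of_uniform hH] at hsum
    exact ⟨H, hH, fun i =>
      (Finset.sum_eq_sum_iff_of_le fun i _ => hdeg i).1 hsum i (Finset.mem_univ i)⟩
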